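/- Let p, q, r be distinct primes. Then k(C_p ⊕ C_q ⊕ C_r) = 3 − 1/p − 1/q − 1/r. -/

import Mathlib

/-- The cross number `k(S)` of a sequence (finite multiset) `S` over an additive group:
the sum, with multiplicity, of the reciprocals of the orders of its elements. -/
noncomputable def crossNum {G : Type*} [AddCommGroup G] (S : Multiset G) : ℝ :=
  (S.map fun g => ((addOrderOf g : ℝ))⁻¹).sum

/-- `S` is zero-sum free: no nonempty sub-multiset of `S` has sum `0`. -/
def IsZeroSumFree {G : Type*} [AddCommGroup G] (S : Multiset G) : Prop :=
  ∀ T : Multiset G, T ≤ S → T ≠ 0 → T.sum ≠ 0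

/-- The little cross number `k(G)`: the maximal cross number of a zero-sum free
sequence over `G`. -/
noncomputable def littleK (G : Type*) [AddCommGroup G] : ℝ :=
  sSup {x : ℝ | ∃ S : Multiset G, IsZeroSumFree S ∧ crossNum S = x}

/-!
Replacing a nonempty subsequence of a zero-sum free sequence by its sum keeps it zero-sum free.
Suppose that `|G|` is squarefree and that `m` elements of a sequence share the order `m * e`, with
`m` prime. Multiplication by `e` sends them to the subgroup `G[m]` of order `m`, so `e` kills the
sum of some of them, at least one and at most `m`; replacing these by their sum does not decrease
the cross number. Hence one may assume that every order `d` occurs fewer than `d.minFac` times.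

If some prime order `p` occurs `p - 1` times, then every element of `G[p]` is a subsum of the
elements of order `p`, so the other elements stay zero-sum free in `G ⧸ G[p]`, and one concludes by
induction on `|G|`. Otherwise every prime order `p` occurs at most `p - 2` times, and it is enough
that the contribution of the composite orders is at most `∑ 1 / p`. An order `p * q` contributes at
most `(1 / p + 1 / q) / 2 - 1 / (p * q)`. For at most three primes, each prime belongs to at most
two pairs, and the terms `- 1 / (p * q)` make up for the order that is a product of three primes.
-/

open scoped AddSubgroup

section Multiset

variable {α β : Type*}

theorem exists_le_map_eq_of_le_map {f : α → β} {S : Multiset α} {T : Multiset β}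
    (h : T ≤ S.map f) : ∃ U ≤ S, U.map f = T := by
  induction S, T using Quotient.inductionOn₂ with
  | _ l t =>
  obtain ⟨t', ht', hsub⟩ := Multiset.coe_le.1 h
  obtain ⟨u, hu, rfl⟩ := List.sublist_map_iff.1 hsub
  exact ⟨u, Multiset.coe_le.2 hu.subperm, Multiset.coe_eq_coe.2 ht'⟩

theorem exists_add_eq_of_le_add {S T U : Multiset α} (h : U ≤ S + T) :
    ∃ V ≤ S, ∃ W ≤ T, V + W = U := by
  classical
  exact ⟨U ∩ S, Multiset.inter_le_right, U - S, tsub_le_iff_left.2 h,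
    (add_comm _ _).trans (Multiset.sub_add_inter U S)⟩

end Multiset

section Subsums

variable {G H : Type*} [AddCommGroup G] [AddCommGroup H]

theorem exists_le_coe_sum_eq_sub (l : List G) {i j : ℕ} (hij : i ≤ j) (hj : j ≤ l.length) :
    ∃ T ≤ (l : Multiset G), T.card = j - i ∧ T.sum = (l.take j).sum - (l.take i).sum := by
  refine ⟨((l.take j).drop i : List G), Multiset.coe_le.2
    ((List.drop_sublist _ _).trans (List.take_sublist _ _)).subperm, by simp [hj], ?_⟩
  rw [Multiset.sum_coe, eq_sub_iff_add_eq', ← List.sum_take_add_sum_drop (l.take j) i,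
    List.take_take, min_eq_left hij]

theorem exists_le_map_sum_eq_zero (φ : G →+ H) (L : AddSubgroup H) [Finite L] {S : Multiset G}
    (hSL : ∀ x ∈ S, φ x ∈ L) (hS : Nat.card L ≤ S.card) :
    ∃ T ≤ S, T ≠ 0 ∧ T.card ≤ Nat.card L ∧ φ T.sum = 0 := by
  have := Fintype.ofFinite L
  induction S using Quotient.inductionOn with
  | _ l =>
  have hmem (n : ℕ) : φ (l.take n).sum ∈ L := by
    rw [map_list_sum]
    refine L.list_sum_mem fun y hy ↦ ?_
    obtain ⟨x, hx, rfl⟩ := List.mem_map.1 hy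
    exact hSL x (List.mem_of_mem_take hx)
  obtain ⟨i, j, hne, heq⟩ := Fintype.exists_ne_map_eq_of_card_lt
    (fun i : Fin (Nat.card L + 1) ↦ (⟨φ (l.take i).sum, hmem i⟩ : L)) (by simp)
  wlog hij : i < j generalizing i j
  · exact this j i hne.symm heq.symm (hne.lt_or_gt.resolve_left hij)
  have hj : (j : ℕ) ≤ Nat.card L := Nat.lt_succ_iff.1 j.2
  obtain ⟨T, hTl, hTcard, hTsum⟩ := exists_le_coe_sum_eq_sub l hij.le (hj.trans hS)
  refine ⟨T, hTl, Multiset.card_pos.1 (hTcard ▸ Nat.sub_pos_of_lt hij), by omega, ?_⟩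
  rw [hTsum, map_sub, sub_eq_zero]
  exact congrArg Subtype.val heq.symm

end Subsums

namespace IsZeroSumFree

variable {G : Type*} [AddCommGroup G] {S T : Multiset G}

theorem mono (hS : IsZeroSumFree S) (hTS : T ≤ S) : IsZeroSumFree T :=
  fun U hU ↦ hS U (hU.trans hTS)

theorem zero : IsZeroSumFree (0 : Multiset G) :=
  fun _ hT hT0 ↦ (hT0 (Multiset.le_zero.1 hT)).elim

theorem ne_zero_of_mem (hS : IsZeroSumFree S) {x : G} (hx : x ∈ S) : x ≠ 0 := by
  simpa using hS {x} (Multiset.singleton_le.2 hx) (Multiset.singleton_ne_zero x)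

theorem sum_cons (h : IsZeroSumFree (T + S)) (hT : T ≠ 0) : IsZeroSumFree (T.sum ::ₘ S) := by
  intro U hU hU0
  rw [← Multiset.singleton_add] at hU
  obtain ⟨V, hV, W, hW, rfl⟩ := exists_add_eq_of_le_add hU
  obtain rfl | rfl := Multiset.le_singleton.1 hV
  · exact h _ (by simpa using hW.trans (Multiset.le_add_left S T)) hU0
  · simpa using h (T + W) (by gcongr) (by simp [hT])

theorem add_of_disjoint {K L : AddSubgroup G} (hKL : Disjoint K L) (hS : IsZeroSumFree S)
    (hT : IsZeroSumFree T) (hSK : ∀ x ∈ S, x ∈ K) (hTL : ∀ x ∈ T, x ∈ L) :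
    IsZeroSumFree (S + T) := by
  intro U hU hU0 hsum
  obtain ⟨V, hV, W, hW, rfl⟩ := exists_add_eq_of_le_add hU
  have hVK : V.sum ∈ K := K.multiset_sum_mem V fun x hx ↦ hSK x (Multiset.mem_of_le hV hx)
  have hWL : W.sum ∈ L := L.multiset_sum_mem W fun x hx ↦ hTL x (Multiset.mem_of_le hW hx)
  rw [Multiset.sum_add] at hsum
  have hV0 : V.sum = 0 :=
    AddSubgroup.disjoint_def.1 hKL hVK (eq_neg_of_add_eq_zero_left hsum ▸ L.neg_mem hWL)
  have hW0 : W.sum = 0 := by simpa [hV0] using hsum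
  have hV : V = 0 := by_contra fun h ↦ hS V hV h hV0
  have hW : W = 0 := by_contra fun h ↦ hT W hW h hW0
  exact hU0 (by simp [hV, hW])

theorem replicate_addOrderOf_sub_one (g : G) :
    IsZeroSumFree (Multiset.replicate (addOrderOf g - 1) g) := by
  intro T hT hT0 hsum
  obtain ⟨n, hn, rfl⟩ := Multiset.le_replicate_iff.1 hT
  have hn0 : n ≠ 0 := by rintro rfl; simp at hT0
  have hdvd : addOrderOf g ∣ n := addOrderOf_dvd_of_nsmul_eq_zero (by simpa using hsum)
  have := Nat.le_of_dvd (Nat.pos_of_ne_zero hn0) hdvd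
  omega

theorem injective_sum_take {l : List G} (hl : IsZeroSumFree (l : Multiset G)) :
    Function.Injective fun i : Fin (l.length + 1) ↦ (l.take i).sum := by
  intro i j heq
  by_contra hne
  wlog hij : i < j generalizing i j
  · exact this heq.symm (Ne.symm hne) ((Ne.lt_or_gt hne).resolve_left hij)
  obtain ⟨T, hTl, hTcard, hTsum⟩ := exists_le_coe_sum_eq_sub l hij.le (Nat.lt_succ_iff.1 j.2)
  exact hl T hTl (Multiset.card_pos.1 (hTcard ▸ Nat.sub_pos_of_lt hij))
    (hTsum.trans (sub_eq_zero.2 heq.symm))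

variable {K : AddSubgroup G} [Finite K]

theorem card_lt (hS : IsZeroSumFree S) (hSK : ∀ x ∈ S, x ∈ K) : S.card < Nat.card K := by
  by_contra! hcard
  obtain ⟨T, hT, hT0, -, hsum⟩ := exists_le_map_sum_eq_zero (AddMonoidHom.id G) K hSK hcard
  exact hS T hT hT0 hsum

theorem exists_le_sum_eq (hS : IsZeroSumFree S) (hSK : ∀ x ∈ S, x ∈ K)
    (hcard : Nat.card K ≤ S.card + 1) {g : G} (hg : g ∈ K) : ∃ T ≤ S, T.sum = g := by
  induction S using Quotient.inductionOn with
  | _ l =>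
  have hmem (i : Fin (l.length + 1)) : (l.take i).sum ∈ K :=
    K.list_sum_mem fun x hx ↦ hSK x (List.mem_of_mem_take hx)
  have hinj : Function.Injective fun i : Fin (l.length + 1) ↦ (⟨(l.take i).sum, hmem i⟩ : K) :=
    fun i j hij ↦ hS.injective_sum_take (congrArg Subtype.val hij)
  obtain ⟨i, hi⟩ := (hinj.bijective_of_nat_card_le (by simpa using hcard)).2 ⟨g, hg⟩
  exact ⟨l.take i, Multiset.coe_le.2 (List.take_sublist _ _).subperm, congrArg Subtype.val hi⟩

open scoped Classical in
theorem map_mk_filter_notMem (hS : IsZeroSumFree S)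
    (hcard : Nat.card K ≤ (S.filter (· ∈ K)).card + 1) :
    IsZeroSumFree ((S.filter (· ∉ K)).map (QuotientAddGroup.mk' K)) := by
  intro T hT hT0 hsum
  obtain ⟨V, hV, rfl⟩ := exists_le_map_eq_of_le_map hT
  rw [← map_multiset_sum, ← AddMonoidHom.mem_ker, QuotientAddGroup.ker_mk'] at hsum
  obtain ⟨U, hU, hUsum⟩ := (hS.mono (Multiset.filter_le _ S)).exists_le_sum_eq
    (fun x hx ↦ Multiset.of_mem_filter hx) hcard (K.neg_mem hsum)
  refine hS (U + V) ?_ (fun h ↦ hT0 ?_) (by simp [hUsum])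
  · exact (add_le_add hU hV).trans (Multiset.filter_add_not _ S).le
  · simp [(add_eq_zero.1 h).2]

end IsZeroSumFree

section CrossNumber

variable {G H : Type*} [AddCommGroup G] [AddCommGroup H]

theorem crossNum_cons (g : G) (S : Multiset G) :
    crossNum (g ::ₘ S) = (addOrderOf g : ℝ)⁻¹ + crossNum S := by
  simp [crossNum]

theorem crossNum_add (S T : Multiset G) : crossNum (S + T) = crossNum S + crossNum T := by
  simp [crossNum]

theorem crossNum_eq_card_mul {S : Multiset G} {d : ℕ} (h : ∀ x ∈ S, addOrderOf x = d) :
    crossNum S = S.card * (d : ℝ)⁻¹ := by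
  rw [crossNum, Multiset.map_congr rfl fun x hx ↦ by rw [h x hx]]
  simp

theorem crossNum_eq_sum_divisors [Finite G] (S : Multiset G) :
    crossNum S = ∑ d ∈ (Nat.card G).divisors, S.countP (addOrderOf · = d) * (d : ℝ)⁻¹ := by
  induction S using Multiset.induction_on with
  | empty => simp [crossNum]
  | cons g S ih =>
    have hg : addOrderOf g ∈ (Nat.card G).divisors :=
      Nat.mem_divisors.2 ⟨addOrderOf_dvd_natCard g, Nat.card_pos.ne'⟩
    simp [crossNum_cons, ih, Multiset.countP_cons, add_mul, Finset.sum_add_distrib,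
      Finset.sum_ite_eq, hg, add_comm]

theorem crossNum_le_crossNum_map [Finite G] (φ : G →+ H) (S : Multiset G) :
    crossNum S ≤ crossNum (S.map φ) := by
  rw [crossNum, crossNum, Multiset.map_map]
  refine Multiset.sum_map_le_sum_map _ _ fun x _ ↦ ?_
  have hdvd := addOrderOf_map_dvd φ x
  have hx : 0 < addOrderOf x := addOrderOf_pos x
  have hφx : 0 < addOrderOf (φ x) := Nat.pos_of_dvd_of_pos hdvd hx
  have hle := Nat.le_of_dvd hx hdvd
  simp only [Function.comp_apply]
  gcongr

open scoped Classical in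
theorem IsZeroSumFree.crossNum_le_add_crossNum_map_mk [Finite G] {K : AddSubgroup G}
    (hK : (Nat.card K).Prime) {S : Multiset G} (hS : IsZeroSumFree S) :
    crossNum S ≤ (1 - (Nat.card K : ℝ)⁻¹)
      + crossNum ((S.filter (· ∉ K)).map (QuotientAddGroup.mk' K)) := by
  have hSK : IsZeroSumFree (S.filter (· ∈ K)) := hS.mono (Multiset.filter_le _ S)
  have horder : ∀ x ∈ S.filter (· ∈ K), addOrderOf x = Nat.card K := fun x hx ↦
    (((Nat.dvd_prime hK).1 (K.addOrderOf_dvd_natCard (Multiset.of_mem_filter hx))).resolve_left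
      (mt AddMonoid.addOrderOf_eq_one_iff.1 (hSK.ne_zero_of_mem hx)))
  have hcard : ((S.filter (· ∈ K)).card : ℝ) + 1 ≤ Nat.card K := by
    exact_mod_cast hSK.card_lt fun x hx ↦ Multiset.of_mem_filter hx
  calc crossNum S = crossNum (S.filter (· ∈ K)) + crossNum (S.filter (· ∉ K)) := by
        rw [← crossNum_add, Multiset.filter_add_not]
    _ ≤ (1 - (Nat.card K : ℝ)⁻¹) + _ := by
        refine add_le_add ?_ (crossNum_le_crossNum_map _ _)
        have hpos : (0 : ℝ) < Nat.card K := by exact_mod_cast hK.pos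
        rw [crossNum_eq_card_mul horder, ← div_eq_mul_inv, ← one_div, div_le_iff₀ hpos]
        field_simp
        linarith

end CrossNumber

section Torsion

variable {G : Type*} [AddCommGroup G]

theorem mem_torsionBy_iff_addOrderOf_dvd {n : ℕ} {x : G} : x ∈ G[n] ↔ addOrderOf x ∣ n :=
  AddSubgroup.torsionBy.nsmul_iff.trans addOrderOf_dvd_iff_nsmul_eq_zero.symm

theorem disjoint_torsionBy_of_coprime {m n : ℕ} (h : m.Coprime n) : Disjoint G[m] G[n] := by
  refine AddSubgroup.disjoint_def.2 fun {x} hm hn ↦ AddMonoid.addOrderOf_eq_one_iff.1 ?_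
  rw [mem_torsionBy_iff_addOrderOf_dvd] at hm hn
  exact Nat.eq_one_of_dvd_coprimes h hm hn

theorem card_torsionBy_dvd_of_squarefree_card (hG : Squarefree (Nat.card G)) {p : ℕ}
    (hp : p.Prime) : Nat.card G[p] ∣ p := by
  have : Finite G := Nat.finite_of_card_ne_zero hG.ne_zero
  have := Fact.mk hp
  let : Module (ZMod p) G[p] := AddSubgroup.torsionBy.zmodModule
  have hpow : Nat.card G[p] ∣ p ^ (Module.finrank (ZMod p) G[p] + 1) := by
    rw [Module.natCard_eq_pow_finrank (K := ZMod p), Nat.card_zmod]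
    exact pow_dvd_pow p (Nat.le_succ _)
  exact ((hG.squarefree_of_dvd G[p].card_addSubgroup_dvd_card).dvd_pow_iff_dvd
    (Nat.succ_ne_zero _)).1 hpow

theorem card_torsionBy_of_squarefree_card (hG : Squarefree (Nat.card G)) {p : ℕ} (hp : p.Prime)
    (hpG : p ∣ Nat.card G) : Nat.card G[p] = p := by
  have : Finite G := Nat.finite_of_card_ne_zero hG.ne_zero
  have := Fact.mk hp
  obtain ⟨x, hx⟩ := exists_prime_addOrderOf_dvd_card' p hpG
  have hxp : x ∈ G[p] := mem_torsionBy_iff_addOrderOf_dvd.2 hx.dvd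
  exact Nat.dvd_antisymm (card_torsionBy_dvd_of_squarefree_card hG hp)
    (hx ▸ G[p].addOrderOf_dvd_natCard hxp)

end Torsion

section Reduction

variable {G : Type*} [AddCommGroup G]

theorem IsZeroSumFree.exists_card_lt_crossNum_le {S : Multiset G} (hS : IsZeroSumFree S)
    {m e : ℕ} (hm : 1 < m) (he : e ≠ 0) [Finite G[m]] (hG : Nat.card G[m] ≤ m)
    (hcount : m ≤ S.countP (addOrderOf · = m * e)) :
    ∃ S' : Multiset G, IsZeroSumFree S' ∧ S'.card < S.card ∧ crossNum S ≤ crossNum S' := by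
  rw [Multiset.countP_eq_card_filter] at hcount
  obtain ⟨T, hT, hT0, hTcard, heT⟩ := exists_le_map_sum_eq_zero (nsmulAddMonoidHom e)
    (S := S.filter (addOrderOf · = m * e)) G[m]
    (fun x hx ↦ AddSubgroup.torsionBy.nsmul_iff.2 <| by
      rw [nsmulAddMonoidHom_apply, ← mul_nsmul', ← (Multiset.mem_filter.1 hx).2,
        addOrderOf_nsmul_eq_zero])
    (hG.trans hcount)
  have horder : ∀ x ∈ T, addOrderOf x = m * e :=
    fun x hx ↦ (Multiset.mem_filter.1 (Multiset.mem_of_le hT hx)).2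
  have hdvd : addOrderOf T.sum ∣ e := addOrderOf_dvd_of_nsmul_eq_zero heT
  have hcard1 : T.card ≠ 1 := by
    rintro h
    obtain ⟨x, rfl⟩ := Multiset.card_eq_one.1 h
    have hle := Nat.le_of_dvd (Nat.pos_of_ne_zero he) hdvd
    rw [Multiset.sum_singleton, horder x (Multiset.mem_singleton_self x)] at hle
    nlinarith [Nat.pos_of_ne_zero he]
  obtain ⟨R, rfl⟩ := Multiset.le_iff_exists_add.1 (hT.trans (Multiset.filter_le _ S))
  refine ⟨T.sum ::ₘ R, hS.sum_cons hT0, ?_, ?_⟩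
  · have := Multiset.card_pos.2 hT0
    simp only [Multiset.card_cons, Multiset.card_add]
    omega
  rw [crossNum_add, crossNum_cons, crossNum_eq_card_mul horder]
  gcongr
  have hmpos : (m : ℝ) ≠ 0 := by positivity
  have hTm : (T.card : ℝ) ≤ m := by exact_mod_cast hTcard.trans hG
  have hpos : 0 < addOrderOf T.sum := Nat.pos_of_dvd_of_pos hdvd (Nat.pos_of_ne_zero he)
  calc T.card * ((m * e : ℕ) : ℝ)⁻¹ ≤ m * ((m * e : ℕ) : ℝ)⁻¹ := by gcongr
    _ = (e : ℝ)⁻¹ := by push_cast; field_simp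
    _ ≤ (addOrderOf T.sum : ℝ)⁻¹ := by
      gcongr
      exact Nat.le_of_dvd (Nat.pos_of_ne_zero he) hdvd

theorem IsZeroSumFree.exists_countP_lt_minFac [Finite G]
    (hG : ∀ p : ℕ, p.Prime → Nat.card G[p] ≤ p) {S : Multiset G} (hS : IsZeroSumFree S) :
    ∃ S' : Multiset G, IsZeroSumFree S' ∧ crossNum S ≤ crossNum S' ∧
      ∀ d : ℕ, S'.countP (addOrderOf · = d) < d.minFac := by
  induction hn : S.card using Nat.strong_induction_on generalizing S with
  | _ n ih =>
  by_cases hred : ∀ d : ℕ, S.countP (addOrderOf · = d) < d.minFac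
  · exact ⟨S, hS, le_rfl, hred⟩
  push Not at hred
  obtain ⟨d, hd⟩ := hred
  obtain ⟨x, hx, rfl⟩ := Multiset.countP_pos.1 ((Nat.minFac_pos d).trans_le hd)
  have hprime : (addOrderOf x).minFac.Prime :=
    Nat.minFac_prime (mt AddMonoid.addOrderOf_eq_one_iff.1 (hS.ne_zero_of_mem hx))
  obtain ⟨e, he⟩ := Nat.minFac_dvd (addOrderOf x)
  have he0 : e ≠ 0 := by
    rintro rfl
    exact (addOrderOf_pos x).ne' he
  obtain ⟨S', hS', hlt, hle⟩ := hS.exists_card_lt_crossNum_le hprime.one_lt he0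
    (hG _ hprime) (by rwa [← he])
  obtain ⟨S'', hS'', hle', hred⟩ := ih _ (hn ▸ hlt) hS' rfl
  exact ⟨S'', hS'', hle.trans hle', hred⟩

end Reduction

section Arithmetic

theorem sum_divisors_eq_sum_powerset_primeFactors {M : Type*} [AddCommMonoid M] {n : ℕ}
    (hn : Squarefree n) (f : ℕ → M) :
    ∑ d ∈ n.divisors, f d = ∑ t ∈ n.primeFactors.powerset, f (∏ p ∈ t, p) := by
  have hprime {t : Finset ℕ} (ht : t ∈ n.primeFactors.powerset) : ∀ p ∈ t, p.Prime :=
    fun p hp ↦ Nat.prime_of_mem_primeFactors (Finset.mem_powerset.1 ht hp)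
  have hsq {d : ℕ} (hd : d ∈ n.divisors) : ∏ p ∈ d.primeFactors, p = d :=
    Nat.prod_primeFactors_of_squarefree (hn.squarefree_of_dvd (Nat.dvd_of_mem_divisors hd))
  refine Finset.sum_nbij' Nat.primeFactors (fun t ↦ ∏ p ∈ t, p) (fun d hd ↦ ?_) (fun t ht ↦ ?_)
    (fun d hd ↦ hsq hd) (fun t ht ↦ Nat.primeFactors_prod (hprime ht)) fun d hd ↦ by rw [hsq hd]
  · exact Finset.mem_powerset.2 (Nat.primeFactors_mono (Nat.dvd_of_mem_divisors hd) hn.ne_zero)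
  · refine Nat.mem_divisors.2 ⟨?_, hn.ne_zero⟩
    conv_rhs => rw [← Nat.prod_primeFactors_of_squarefree hn]
    exact Finset.prod_dvd_prod_of_subset _ _ _ (Finset.mem_powerset.1 ht)

theorem sum_primeFactors_mul_prime {M : Type*} [AddCommMonoid M] {m p : ℕ} (hp : p.Prime)
    (hmp : Squarefree (m * p)) (f : ℕ → M) :
    ∑ q ∈ (m * p).primeFactors, f q = f p + ∑ q ∈ m.primeFactors, f q := by
  have hcop := Nat.coprime_of_squarefree_mul hmp
  rw [hcop.primeFactors_mul, Finset.sum_union hcop.disjoint_primeFactors, hp.primeFactors,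
    Finset.sum_singleton, add_comm]

theorem powerset_singleton_eq_pair {α : Type*} [DecidableEq α] (a : α) :
    ({a} : Finset α).powerset = {∅, {a}} :=
  rfl

/-- The largest possible contribution of the elements of order `d` to the cross number of a
sequence in which fewer than `d.minFac` elements have order `d`. It is set to `0` for prime `d`,
where the upper bound requires a separate argument. -/
noncomputable def nonprimeWeight (d : ℕ) : ℝ :=
  if d.Prime then 0 else ((d.minFac : ℝ) - 1) * (d : ℝ)⁻¹

theorem nonprimeWeight_one : nonprimeWeight 1 = 0 := by
  simp [nonprimeWeight]

theorem nonprimeWeight_of_prime {p : ℕ} (hp : p.Prime) : nonprimeWeight p = 0 :=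
  if_pos hp

theorem nonprimeWeight_mul_le {a : ℕ} (ha : 2 ≤ a) (b : ℕ) :
    nonprimeWeight (a * b) ≤ (b : ℝ)⁻¹ - (a : ℝ)⁻¹ * (b : ℝ)⁻¹ := by
  have ha1 : (1 : ℝ) ≤ a := by exact_mod_cast (by omega : 1 ≤ a)
  have hbound : ((a : ℝ) - 1) * ((a * b : ℕ) : ℝ)⁻¹ = (b : ℝ)⁻¹ - (a : ℝ)⁻¹ * (b : ℝ)⁻¹ := by
    rw [Nat.cast_mul, mul_inv]
    field_simp
  rw [← hbound, nonprimeWeight]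
  split_ifs
  · exact mul_nonneg (sub_nonneg.2 ha1) (by positivity)
  · gcongr
    exact Nat.minFac_le_of_dvd ha (dvd_mul_right a b)

theorem nonprimeWeight_mul_le_half {a b : ℕ} (ha : 2 ≤ a) (hb : 2 ≤ b) :
    nonprimeWeight (a * b) ≤ ((a : ℝ)⁻¹ + (b : ℝ)⁻¹) / 2 - (a : ℝ)⁻¹ * (b : ℝ)⁻¹ := by
  have hab := nonprimeWeight_mul_le ha b
  have hba := nonprimeWeight_mul_le hb a
  rw [mul_comm b a] at hba
  linarith

theorem sum_nonprimeWeight_prod_powerset_pair_le {a b : ℕ} (ha : a.Prime) (hb : b.Prime)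
    (hab : a ≠ b) :
    ∑ t ∈ ({a, b} : Finset ℕ).powerset, nonprimeWeight (∏ p ∈ t, p)
      ≤ ∑ p ∈ ({a, b} : Finset ℕ), (p : ℝ)⁻¹ := by
  have hinv (x : ℕ) : (0 : ℝ) ≤ (x : ℝ)⁻¹ := by positivity
  calc ∑ t ∈ ({a, b} : Finset ℕ).powerset, nonprimeWeight (∏ p ∈ t, p)
      = nonprimeWeight (a * b) := by
        simp [powerset_singleton_eq_pair, Finset.sum_powerset_insert, hab, nonprimeWeight_one,
          nonprimeWeight_of_prime, ha, hb]
    _ ≤ (a : ℝ)⁻¹ + (b : ℝ)⁻¹ := by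
        linarith [nonprimeWeight_mul_le_half ha.two_le hb.two_le, hinv a, hinv b,
          mul_nonneg (hinv a) (hinv b)]
    _ = ∑ p ∈ {a, b}, (p : ℝ)⁻¹ := by simp [hab]

theorem sum_nonprimeWeight_prod_powerset_triple_le {a b c : ℕ} (ha : a.Prime) (hb : b.Prime)
    (hc : c.Prime) (hab : a ≠ b) (hac : a ≠ c) (hbc : b ≠ c) :
    ∑ t ∈ ({a, b, c} : Finset ℕ).powerset, nonprimeWeight (∏ p ∈ t, p)
      ≤ ∑ p ∈ ({a, b, c} : Finset ℕ), (p : ℝ)⁻¹ := by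
  have hinv (x : ℕ) : (0 : ℝ) ≤ (x : ℝ)⁻¹ := by positivity
  have habc := nonprimeWeight_mul_le ha.two_le (b * c)
  rw [Nat.cast_mul, mul_inv] at habc
  calc ∑ t ∈ ({a, b, c} : Finset ℕ).powerset, nonprimeWeight (∏ p ∈ t, p)
      = nonprimeWeight (b * c) + (nonprimeWeight (a * c) + (nonprimeWeight (a * b)
          + nonprimeWeight (a * (b * c)))) := by
        simp [powerset_singleton_eq_pair, Finset.sum_powerset_insert, hab, hac, hbc,
          nonprimeWeight_one, nonprimeWeight_of_prime, ha, hb, hc]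
    _ ≤ (a : ℝ)⁻¹ + ((b : ℝ)⁻¹ + (c : ℝ)⁻¹) := by
        linarith [nonprimeWeight_mul_le_half ha.two_le hb.two_le,
          nonprimeWeight_mul_le_half ha.two_le hc.two_le,
          nonprimeWeight_mul_le_half hb.two_le hc.two_le,
          mul_nonneg (hinv a) (hinv b), mul_nonneg (hinv a) (hinv c),
          mul_nonneg (hinv a) (mul_nonneg (hinv b) (hinv c))]
    _ = ∑ p ∈ {a, b, c}, (p : ℝ)⁻¹ := by simp [hab, hac, hbc]

theorem sum_nonprimeWeight_divisors_le {n : ℕ} (hn : Squarefree n)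
    (hcard : n.primeFactors.card ≤ 3) :
    ∑ d ∈ n.divisors, nonprimeWeight d ≤ ∑ p ∈ n.primeFactors, (p : ℝ)⁻¹ := by
  have hprime : ∀ p ∈ n.primeFactors, p.Prime := fun p hp ↦ Nat.prime_of_mem_primeFactors hp
  rw [sum_divisors_eq_sum_powerset_primeFactors hn]
  generalize n.primeFactors = s at hcard hprime
  interval_cases h : s.card
  · simp [Finset.card_eq_zero.1 h, nonprimeWeight_one]
  · obtain ⟨a, rfl⟩ := Finset.card_eq_one.1 h
    have ha : a.Prime := hprime a (by simp)
    simp [powerset_singleton_eq_pair, nonprimeWeight_one, nonprimeWeight_of_prime ha]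
  · obtain ⟨a, b, hab, rfl⟩ := Finset.card_eq_two.1 h
    exact sum_nonprimeWeight_prod_powerset_pair_le (hprime a (by simp)) (hprime b (by simp)) hab
  · obtain ⟨a, b, c, hab, hac, hbc, rfl⟩ := Finset.card_eq_three.1 h
    exact sum_nonprimeWeight_prod_powerset_triple_le (hprime a (by simp)) (hprime b (by simp))
      (hprime c (by simp)) hab hac hbc

end Arithmetic

section UpperBound

theorem crossNum_le_of_countP_lt {G : Type*} [AddCommGroup G] [Finite G] {S : Multiset G}
    (hcount : ∀ d : ℕ, S.countP (addOrderOf · = d) < d.minFac)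
    (hprime : ∀ p ∈ (Nat.card G).primeFactors, S.countP (addOrderOf · = p) + 1 < p)
    (hweight : ∑ d ∈ (Nat.card G).divisors, nonprimeWeight d
      ≤ ∑ p ∈ (Nat.card G).primeFactors, (p : ℝ)⁻¹) :
    crossNum S ≤ ∑ p ∈ (Nat.card G).primeFactors, (1 - (p : ℝ)⁻¹) := by
  have hterm : ∀ d ∈ (Nat.card G).divisors, S.countP (addOrderOf · = d) * (d : ℝ)⁻¹
      ≤ nonprimeWeight d + if d.Prime then 1 - 2 * (d : ℝ)⁻¹ else 0 := by
    intro d hd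
    by_cases hdp : d.Prime
    · have hle : (S.countP (addOrderOf · = d) : ℝ) + 2 ≤ d := by
        exact_mod_cast hprime d
          (hdp.mem_primeFactors (Nat.dvd_of_mem_divisors hd) (Nat.mem_divisors.1 hd).2)
      have hd0 : (d : ℝ) ≠ 0 := by exact_mod_cast hdp.ne_zero
      calc S.countP (addOrderOf · = d) * (d : ℝ)⁻¹ ≤ (d - 2) * (d : ℝ)⁻¹ := by gcongr; linarith
        _ = nonprimeWeight d + if d.Prime then 1 - 2 * (d : ℝ)⁻¹ else 0 := by
          rw [nonprimeWeight_of_prime hdp, if_pos hdp, zero_add, sub_mul, mul_inv_cancel₀ hd0]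
    · have hle : (S.countP (addOrderOf · = d) : ℝ) + 1 ≤ d.minFac := by
        exact_mod_cast hcount d
      rw [nonprimeWeight, if_neg hdp, if_neg hdp, add_zero]
      gcongr
      linarith
  calc crossNum S
      ≤ ∑ d ∈ (Nat.card G).divisors,
          (nonprimeWeight d + if d.Prime then 1 - 2 * (d : ℝ)⁻¹ else 0) :=
        (crossNum_eq_sum_divisors S).trans_le (Finset.sum_le_sum hterm)
    _ = ∑ d ∈ (Nat.card G).divisors, nonprimeWeight d
          + ∑ p ∈ (Nat.card G).primeFactors, (1 - 2 * (p : ℝ)⁻¹) := by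
        rw [Finset.sum_add_distrib, ← Finset.sum_filter,
          Nat.primeFactors_eq_to_filter_divisors_prime]
    _ ≤ ∑ p ∈ (Nat.card G).primeFactors, (p : ℝ)⁻¹
          + ∑ p ∈ (Nat.card G).primeFactors, (1 - 2 * (p : ℝ)⁻¹) := by gcongr
    _ = ∑ p ∈ (Nat.card G).primeFactors, (1 - (p : ℝ)⁻¹) := by
        rw [← Finset.sum_add_distrib]
        exact Finset.sum_congr rfl fun p _ ↦ by ring

theorem IsZeroSumFree.exists_quotient_crossNum_le {G : Type*} [AddCommGroup G] [Finite G]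
    {S : Multiset G} (hS : IsZeroSumFree S) {p : ℕ} (hp : p.Prime) (hK : Nat.card G[p] = p)
    (hcount : p ≤ S.countP (addOrderOf · = p) + 1) :
    ∃ T : Multiset (G ⧸ G[p]), IsZeroSumFree T ∧ crossNum S ≤ (1 - (p : ℝ)⁻¹) + crossNum T := by
  classical
  refine ⟨(S.filter (· ∉ G[p])).map (QuotientAddGroup.mk' G[p]), hS.map_mk_filter_notMem ?_, ?_⟩
  · rw [hK]
    refine hcount.trans (Nat.succ_le_succ ?_)
    rw [Multiset.countP_eq_card_filter]
    exact Multiset.card_le_card (Multiset.monotone_filter_right _ fun x hx ↦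
      mem_torsionBy_iff_addOrderOf_dvd.2 hx.dvd)
  · have hle := hS.crossNum_le_add_crossNum_map_mk (K := G[p]) (by rwa [hK])
    rwa [hK] at hle

theorem IsZeroSumFree.crossNum_le_of_squarefree_card {G : Type*} [AddCommGroup G]
    (hG : Squarefree (Nat.card G)) (hcard : (Nat.card G).primeFactors.card ≤ 3) {S : Multiset G}
    (hS : IsZeroSumFree S) : crossNum S ≤ ∑ p ∈ (Nat.card G).primeFactors, (1 - (p : ℝ)⁻¹) := by
  induction hn : Nat.card G using Nat.strong_induction_on generalizing G S with
  | _ n ih =>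
  subst hn
  have : Finite G := Nat.finite_of_card_ne_zero hG.ne_zero
  obtain ⟨S', hS', hle, hcount⟩ := hS.exists_countP_lt_minFac fun p hp ↦
    Nat.le_of_dvd hp.pos (card_torsionBy_dvd_of_squarefree_card hG hp)
  refine hle.trans ?_
  by_cases hprime : ∀ p ∈ (Nat.card G).primeFactors, S'.countP (addOrderOf · = p) + 1 < p
  · exact crossNum_le_of_countP_lt hcount hprime (sum_nonprimeWeight_divisors_le hG hcard)
  push Not at hprime
  obtain ⟨p, hpG, hple⟩ := hprime
  have hp := Nat.prime_of_mem_primeFactors hpG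
  have hK : Nat.card G[p] = p :=
    card_torsionBy_of_squarefree_card hG hp (Nat.dvd_of_mem_primeFactors hpG)
  have hquot : Nat.card G = Nat.card (G ⧸ G[p]) * p := by
    rw [AddSubgroup.card_eq_card_quotient_mul_card_addSubgroup G[p], hK]
  have hdvd : Nat.card (G ⧸ G[p]) ∣ Nat.card G := Dvd.intro _ hquot.symm
  have hlt : Nat.card (G ⧸ G[p]) < Nat.card G := by
    rw [hquot]
    exact lt_mul_of_one_lt_right Nat.card_pos hp.one_lt
  obtain ⟨T, hT, hS'T⟩ := hS'.exists_quotient_crossNum_le hp hK hple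
  calc crossNum S' ≤ (1 - (p : ℝ)⁻¹) + crossNum T := hS'T
    _ ≤ (1 - (p : ℝ)⁻¹) + ∑ q ∈ (Nat.card (G ⧸ G[p])).primeFactors, (1 - (q : ℝ)⁻¹) := by
        gcongr
        exact ih _ hlt (hG.squarefree_of_dvd hdvd)
          ((Finset.card_le_card (Nat.primeFactors_mono hdvd hG.ne_zero)).trans hcard) hT rfl
    _ = ∑ q ∈ (Nat.card G).primeFactors, (1 - (q : ℝ)⁻¹) := by
        rw [hquot, sum_primeFactors_mul_prime hp (hquot ▸ hG)]

end UpperBound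

section LowerBound

variable {G : Type*} [AddCommGroup G]

theorem exists_isZeroSumFree_crossNum_eq [Finite G] : ∃ S : Multiset G,
    IsZeroSumFree S ∧ crossNum S = ∑ p ∈ (Nat.card G).primeFactors, (1 - (p : ℝ)⁻¹) := by
  suffices h : ∀ s ⊆ (Nat.card G).primeFactors, ∃ S : Multiset G, IsZeroSumFree S ∧
      (∀ x ∈ S, x ∈ G[(∏ p ∈ s, p : ℕ)]) ∧ crossNum S = ∑ p ∈ s, (1 - (p : ℝ)⁻¹) by
    obtain ⟨S, hS, -, hcross⟩ := h _ subset_rfl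
    exact ⟨S, hS, hcross⟩
  intro s hs
  induction s using Finset.induction_on with
  | empty => exact ⟨0, IsZeroSumFree.zero, by simp, by simp [crossNum]⟩
  | insert p s hps ih =>
    obtain ⟨hpG, hsG⟩ := Finset.insert_subset_iff.1 hs
    obtain ⟨S, hS, hSs, hcross⟩ := ih hsG
    have hp := Nat.prime_of_mem_primeFactors hpG
    have := Fact.mk hp
    obtain ⟨g, hg⟩ := exists_prime_addOrderOf_dvd_card' p (Nat.dvd_of_mem_primeFactors hpG)
    have hgp : g ∈ G[p] := mem_torsionBy_iff_addOrderOf_dvd.2 hg.dvd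
    have hcop : p.Coprime (∏ q ∈ s, q) := Nat.Coprime.prod_right fun q hq ↦
      (Nat.coprime_primes hp (Nat.prime_of_mem_primeFactors (hsG hq))).2
        (ne_of_mem_of_not_mem hq hps).symm
    refine ⟨Multiset.replicate (addOrderOf g - 1) g + S,
      (IsZeroSumFree.replicate_addOrderOf_sub_one g).add_of_disjoint
        (disjoint_torsionBy_of_coprime hcop) hS
        (fun x hx ↦ Multiset.eq_of_mem_replicate hx ▸ hgp) hSs, ?_, ?_⟩
    · intro x hx
      rw [Finset.prod_insert hps, mem_torsionBy_iff_addOrderOf_dvd]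
      obtain hx | hx := Multiset.mem_add.1 hx
      · rw [Multiset.eq_of_mem_replicate hx, hg]
        exact dvd_mul_right p _
      · exact (mem_torsionBy_iff_addOrderOf_dvd.1 (hSs x hx)).mul_left p
    · rw [crossNum_add, hcross, Finset.sum_insert hps,
        crossNum_eq_card_mul fun x hx ↦ by rw [Multiset.eq_of_mem_replicate hx, hg],
        Multiset.card_replicate, hg, Nat.cast_pred hp.pos, sub_mul, one_mul,
        mul_inv_cancel₀ (by exact_mod_cast hp.ne_zero)]

end LowerBound

theorem littleK_zmod_prod_three_primes_general {G : Type*} [AddCommGroup G] {s : Finset ℕ}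
    (hs : ∀ p ∈ s, p.Prime) (hcard : s.card ≤ 3) (hG : Nat.card G = ∏ p ∈ s, p) :
    littleK G = ∑ p ∈ s, (1 - (p : ℝ)⁻¹) := by
  have hsq : Squarefree (Nat.card G) := by
    rw [hG]
    refine Finset.squarefree_prod_of_pairwise_isCoprime (fun p hp q hq hpq ↦ ?_)
      fun p hp ↦ (hs p hp).squarefree
    exact Nat.coprime_iff_isRelPrime.1 ((Nat.coprime_primes (hs p hp) (hs q hq)).2 hpq)
  have : Finite G := Nat.finite_of_card_ne_zero hsq.ne_zero
  obtain ⟨S, hS, hcross⟩ := exists_isZeroSumFree_crossNum_eq (G := G)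
  have hfactors : (Nat.card G).primeFactors = s := hG ▸ Nat.primeFactors_prod hs
  rw [hfactors] at hcross
  refine IsGreatest.csSup_eq ⟨⟨S, hS, hcross⟩, ?_⟩
  rintro _ ⟨T, hT, rfl⟩
  simpa only [hfactors] using hT.crossNum_le_of_squarefree_card hsq (by rwa [hfactors])

/-- For distinct primes `p, q, r`: `k(C_p ⊕ C_q ⊕ C_r) = 3 - 1/p - 1/q - 1/r`. -/
theorem littleK_zmod_prod_three_primes
    (p q r : ℕ) (hp : p.Prime) (hq : q.Prime) (hr : r.Prime)
    (hpq : p ≠ q) (hpr : p ≠ r) (hqr : q ≠ r) :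
    littleK (ZMod p × ZMod q × ZMod r)
      = 3 - (p : ℝ)⁻¹ - (q : ℝ)⁻¹ - (r : ℝ)⁻¹ := by
  rw [littleK_zmod_prod_three_primes_general (s := {p, q, r}) (by simp [hp, hq, hr])
    Finset.card_le_three (by simp [hpq, hpr, hqr]), Finset.sum_insert (by simp [hpq, hpr]),
    Finset.sum_pair hqr]
  ring
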